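/- Let m ∈ ℕ with m ≥ 1, let p be a minimal idempotent ultrafilter on ℕ, let A ∈ ⊗_{i=1}^m p, and let T ∈ 𝒫_f(ℙ). Then there exist functions α : 𝒫_f(ℕ^ℕ) → ℕ and H : 𝒫_f(ℕ^ℕ) → 𝒫_f(ℕ) such that (1) whenever G, K ∈ 𝒫_f(ℕ^ℕ) and G ⊊ K one has max H(G) < min H(K), and (2) whenever G₁ ⊊ G₂ ⊊ ⋯ ⊊ G_n ⊊ ⋯ is an infinite strictly increasing chain in 𝒫_f(ℕ^ℕ), f_i ∈ G_i for each i ∈ ℕ, β₁ < β₂ < ⋯ < β_m are in 𝒫_f(ℕ), and P₁,…,P_m ∈ T, the tuple (Σ_{i∈β₁}α(G_i) + P₁(Σ_{i∈β₁}Σ_{t∈H(G_i)}f_i(t)), …, Σ_{i∈β_m}α(G_i) + P_m(Σ_{i∈β_m}Σ_{t∈H(G_i)}f_i(t))) belongs to A. -/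

import Mathlib

namespace MultiCST

/-- The sum `p + q` of ultrafilters on ℕ: `A ∈ p + q` iff `{x : {y : x+y ∈ A} ∈ q} ∈ p`. -/
def uAdd (p q : Ultrafilter ℕ) : Ultrafilter ℕ :=
  p.bind fun x => q.map fun y => x + y

/-- `A ⊆ ℕ` is a J-set. -/
def IsJSet (A : Set ℕ) : Prop :=
  ∀ F : Finset (ℕ → ℕ), F.Nonempty →
    ∃ (a : ℕ) (β : Finset ℕ), β.Nonempty ∧ ∀ f ∈ F, a + ∑ t ∈ β, f t ∈ A

/-- `p ∈ 𝒥`: every member of `p` is a J-set. -/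
def MemJ (p : Ultrafilter ℕ) : Prop := ∀ A : Set ℕ, A ∈ p → IsJSet A

/-- `p` is an idempotent ultrafilter. -/
def IdempotentUF (p : Ultrafilter ℕ) : Prop := uAdd p p = p

/-- `p` is a minimal idempotent ultrafilter. -/
def IsMinimalIdempotent (p : Ultrafilter ℕ) : Prop :=
  IdempotentUF p ∧
    ∀ q : Ultrafilter ℕ, IdempotentUF q → uAdd q p = q → uAdd p q = q → q = p

/-- Tensor product `⊗_{i=1}^m p_i` of ultrafilters on ℕ, as an ultrafilter on `Fin m → ℕ`. -/
def tensor : ∀ m : ℕ, (Fin m → Ultrafilter ℕ) → Ultrafilter (Fin m → ℕ)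
  | 0, _ => pure fun i => i.elim0
  | m + 1, p =>
      (p 0).bind fun x => (tensor m fun i => p i.succ).map fun v => Fin.cons x v

/-- `f : ℕ → ℕ` is (given by) a polynomial with coefficients in ℕ and zero constant term. -/
def IsPolyZeroConst (f : ℕ → ℕ) : Prop :=
  ∃ P : Polynomial ℕ, P.coeff 0 = 0 ∧ ∀ x, f x = P.eval x

/-- The linear combination `a₁·p₁ + a₂·p₂ + ⋯ + a_m·p_m` of ultrafilters on ℕ. -/
def linComb : ∀ m : ℕ, (Fin m → ℕ) → (Fin m → Ultrafilter ℕ) → Ultrafilter ℕ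
  | 0, _, _ => pure 0
  | m + 1, a, p =>
      uAdd ((p 0).map fun x => a 0 * x)
        (linComb m (fun i => a i.succ) fun i => p i.succ)

/-!
Polynomial maps satisfy a van der Waerden theorem along finite sums, by colour focusing and
Bergelson and Leibman's polynomial exhaustion: subtracting a map `g` of least degree from all
translates of a finite family replaces the class of `g` by classes of smaller degree. If `B` belongs
to a minimal idempotent `p`, then finitely many `t` suffice to have, for every `x`, some `t` with
`t + x + y ∈ B` for `p`-most `y`. Colouring `x` by such a `t` shows that `B` contains configurations
`a + P (∑ t ∈ H, f t)`, simultaneously for finitely many polynomials `P` without constant term and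
finitely many functions `f`.

Membership of `A` in the tensor power means that the finite sequences at which the section of `A`
is large form a tree whose members extend along `p`. By idempotence the tree may be thinned so
that the last entry of a sequence can also be enlarged along `p`. Now choose `α F` and `H F` by
recursion on `F`, maintaining the finite set of partially built tuples which chains below `F` can
produce. The index of `F` either enlarges the last sum of such a tuple or starts a new one. As
`P (x + y) - P x` is again a polynomial in `y` without constant term, all these possibilities
together amount to a single configuration inside one member of `p`.
-/

universe u

section PolyMap

variable {V G : Type*} [AddCommGroup G]

/-- The cross-difference `x ↦ R (v + x) - R v - R x` of a map `R`, as an additive function of `R`.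
It measures the failure of additivity of `R` and drives the induction on degree. -/
def crossDiff [AddZeroClass V] (v : V) : (V → G) →+ (V → G) where
  toFun R x := R (v + x) - R v - R x
  map_zero' := by ext; simp
  map_add' R S := by ext; simp only [Pi.add_apply]; abel

/-- The group of polynomial maps of degree at most `d` vanishing at `0`: those killed by any `d + 1`
successive operations, the last being evaluation and the others being cross-differences. -/
def polyMap [AddZeroClass V] : ℕ → AddSubgroup (V → G)
  | 0 => ⊥
  | d + 1 => ⨅ v, (polyMap d).comap (crossDiff v)

section AddZeroClass

variable [AddZeroClass V]

lemma crossDiff_apply (v : V) (R : V → G) (x : V) : crossDiff v R x = R (v + x) - R v - R x := rfl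

lemma mem_polyMap_succ {d : ℕ} {R : V → G} :
    R ∈ polyMap (d + 1) ↔ ∀ v, crossDiff v R ∈ polyMap d := by
  simp only [polyMap, AddSubgroup.mem_iInf, AddSubgroup.mem_comap]

lemma polyMap_mono : Monotone (polyMap : ℕ → AddSubgroup (V → G)) := by
  refine monotone_nat_of_le_succ fun d => ?_
  induction d with
  | zero => exact bot_le
  | succ d ih => exact fun R hR => mem_polyMap_succ.2 fun v => ih (mem_polyMap_succ.1 hR v)

lemma apply_zero_of_mem_polyMap {d : ℕ} {R : V → G} (hR : R ∈ polyMap d) : R 0 = 0 := by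
  induction d generalizing R with
  | zero => exact congrFun (AddSubgroup.mem_bot.1 hR) 0
  | succ d ih => simpa [crossDiff_apply] using ih (mem_polyMap_succ.1 hR 0)

end AddZeroClass

open Polynomial in
lemma eval_sub_eval_zero_mem_polyMap {A : Type*} [CommRing A] [AddZeroClass V] (φ : V →+ A) {d : ℕ}
    {P : A[X]} (hP : P.natDegree ≤ d) : (fun v => P.eval (φ v) - P.eval 0) ∈ polyMap d := by
  induction d generalizing P with
  | zero =>
    rw [eq_C_of_natDegree_le_zero hP]
    simp [polyMap, funext_iff]
  | succ d ih =>
    refine mem_polyMap_succ.2 fun v => ?_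
    have hdeg : (taylor (φ v) P - P).natDegree ≤ d := by
      rcases eq_or_ne P 0 with rfl | hP0
      · simp
      rcases eq_or_ne (taylor (φ v) P - P) 0 with h0 | h0
      · simp [h0]
      have hlt := natDegree_lt_natDegree h0 <|
        (degree_sub_lt_right (degree_taylor P (φ v)) hP0 (leadingCoeff_taylor _ _))
      omega
    convert ih hdeg using 2 with x
    simp only [crossDiff_apply, eval_sub, taylor_eval, map_add, zero_add, add_comm (φ v)]
    ring

end PolyMap

/-! ### Polynomial van der Waerden theorem along finite sums -/

section IPRecurrent

open scoped Pointwise FinsetFamily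
open Finset

variable {V : Type*} {G : Type u} [AddCommMonoid V] [AddCommGroup G]
  {x : ℕ → V} {𝓡 : Finset (V → G)} {g : V → G} {κ : Type u}

/-- The finite family `𝓡` satisfies the van der Waerden theorem along the finite sums of `x`: every
finite colouring `c` of `G` has `a` and `H` with `c (a + R (∑ t ∈ H, x t)) = c a` for all `R ∈ 𝓡`.
The form is finitary (`a` and `H` come from finite sets independent of `c`), and `H` may be taken
beyond any given `n`. -/
def IPRecurrent (x : ℕ → V) (𝓡 : Finset (V → G)) : Prop :=
  ∀ (κ : Type u) [Finite κ] (n : ℕ), ∃ (W : Finset G) (ℋ : Finset (Finset ℕ)),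
    (∀ H ∈ ℋ, H.Nonempty ∧ ∀ t ∈ H, n ≤ t) ∧
    ∀ c : G → κ, ∃ a ∈ W, ∃ H ∈ ℋ, ∀ R ∈ 𝓡, c (a + R (∑ t ∈ H, x t)) = c a

lemma IPRecurrent.empty (x : ℕ → V) : IPRecurrent x (∅ : Finset (V → G)) := fun _ _ n =>
  ⟨{0}, {{n}}, by simp, fun _ => ⟨0, by simp, {n}, by simp, by simp⟩⟩

open Classical in
lemma IPRecurrent.of_erase_zero (h : IPRecurrent x (𝓡.erase 0)) : IPRecurrent x 𝓡 := by
  intro κ _ n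
  obtain ⟨W, ℋ, hℋ, hW⟩ := h κ n
  refine ⟨W, ℋ, hℋ, fun c => ?_⟩
  obtain ⟨a, ha, H, hH, hc⟩ := hW c
  refine ⟨a, ha, H, hH, fun R hR => ?_⟩
  rcases eq_or_ne R 0 with rfl | hR0
  · simp
  · exact hc R (mem_erase.2 ⟨hR0, hR⟩)

open Classical in
/-- The family to which polynomial exhaustion passes from `𝓡`: the maps
`v ↦ R (∑ t ∈ K, x t + v) - R (∑ t ∈ K, x t) - g v` for `R ∈ 𝓡` and `K ∈ ℋ` or `K = ∅`. -/
noncomputable def derived (x : ℕ → V) (𝓡 : Finset (V → G)) (g : V → G) (ℋ : Finset (Finset ℕ)) :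
    Finset (V → G) :=
  image₂ (fun R K => crossDiff (∑ t ∈ K, x t) R + R - g) 𝓡 (insert ∅ ℋ)

/-- Colour focusing: `a` is the focus, for the colouring `c`, of monochromatic configurations in
each of the colours of `C`. -/
def FocusedAt (x : ℕ → V) (𝓡 : Finset (V → G)) (ℋ : Finset (Finset ℕ)) (c : G → κ) (a : G)
    (C : Finset κ) : Prop :=
  ∀ k ∈ C, ∃ H ∈ ℋ, ∀ R ∈ 𝓡, c (a + R (∑ t ∈ H, x t)) = k

/-- Every colouring by `κ` has a focus which is already of one of the focused colours, or for which
at least `j` colours are focused. -/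
def HasFocus (x : ℕ → V) (𝓡 : Finset (V → G)) (κ : Type u) (n j : ℕ) : Prop :=
  ∃ (W : Finset G) (ℋ : Finset (Finset ℕ)), (∀ H ∈ ℋ, H.Nonempty ∧ ∀ t ∈ H, n ≤ t) ∧
    ∀ c : G → κ, ∃ a ∈ W, ∃ C, FocusedAt x 𝓡 ℋ c a C ∧ (c a ∈ C ∨ j ≤ #C)

lemma FocusedAt.mono {ℋ ℋ' : Finset (Finset ℕ)} (hℋ : ℋ ⊆ ℋ') {c : G → κ} {a : G} {C : Finset κ}
    (h : FocusedAt x 𝓡 ℋ c a C) : FocusedAt x 𝓡 ℋ' c a C := fun k hk =>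
  (h k hk).imp fun _ hH => ⟨hℋ hH.1, hH.2⟩

open Classical in
lemma FocusedAt.insert_color {ℋ ℋ' : Finset (Finset ℕ)} {c : G → κ} {a' a b : G} {C : Finset κ}
    {H : Finset ℕ} (hC : FocusedAt x 𝓡 ℋ (fun z => c (a' + z)) a C) (h0 : ∀ R ∈ 𝓡, R 0 = 0)
    (hH : H ∈ ℋ')
    (hshift : ∀ R ∈ 𝓡, ∀ K ∈ insert ∅ ℋ,
      c (b + R (∑ t ∈ K ∪ H, x t)) = c (a' + (a + R (∑ t ∈ K, x t)))) :
    FocusedAt x 𝓡 (insert ∅ ℋ ⊻ ℋ') c b (insert (c (a' + a)) C) := by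
  intro k hk
  rcases mem_insert.1 hk with rfl | hk
  · refine ⟨∅ ∪ H, sup_mem_sups (mem_insert_self _ _) hH, fun R hR => ?_⟩
    simpa [h0 R hR] using hshift R hR ∅ (mem_insert_self _ _)
  · obtain ⟨K, hK, hKk⟩ := hC k hk
    refine ⟨K ∪ H, sup_mem_sups (mem_insert_of_mem hK) hH, fun R hR => ?_⟩
    exact (hshift R hR K (mem_insert_of_mem hK)).trans (hKk R hR)

lemma HasFocus.zero (x : ℕ → V) (𝓡 : Finset (V → G)) (κ : Type u) (n : ℕ) : HasFocus x 𝓡 κ n 0 :=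
  ⟨{0}, ∅, by simp, fun _ => ⟨0, by simp, ∅, by simp [FocusedAt], Or.inr (Nat.zero_le _)⟩⟩

lemma exists_forall_mem_lt (ℋ : Finset (Finset ℕ)) : ∃ N, ∀ K ∈ ℋ, ∀ t ∈ K, t < N := by
  obtain ⟨N, hN⟩ := exists_nat_subset_range (ℋ.biUnion id)
  exact ⟨N, fun K hK t ht => mem_range.1 (hN (mem_biUnion.2 ⟨K, hK, ht⟩))⟩

open Classical in
/-- Recurrence of the derived family, applied to the product colouring `a' ↦ (w ↦ c (a' + w))` with
`w` in a window containing all configurations found so far, reproduces these with a new focus. -/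
lemma exists_shift (𝓡 : Finset (V → G)) [Finite κ] {ℋ : Finset (Finset ℕ)}
    (hrec : IPRecurrent x (derived x 𝓡 g ℋ)) (W : Finset G) (n : ℕ) :
    ∃ (W' : Finset G) (ℋ' : Finset (Finset ℕ)), (∀ H ∈ ℋ', H.Nonempty ∧ ∀ t ∈ H, n ≤ t) ∧
      ∀ c : G → κ, ∃ a' ∈ W', ∃ H ∈ ℋ', ∀ a ∈ W, ∀ R ∈ 𝓡, ∀ K ∈ insert ∅ ℋ,
        c (a' + a - g (∑ t ∈ H, x t) + R (∑ t ∈ K ∪ H, x t)) =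
          c (a' + (a + R (∑ t ∈ K, x t))) := by
  let window : Finset G := W + image₂ (fun R K => R (∑ t ∈ K, x t)) 𝓡 (insert ∅ ℋ)
  obtain ⟨N, hN⟩ := exists_forall_mem_lt ℋ
  obtain ⟨W', ℋ', hℋ', hW'⟩ := hrec (window → κ) (max n N)
  refine ⟨W', ℋ', fun H hH =>
    ⟨(hℋ' H hH).1, fun t ht => (le_max_left _ _).trans ((hℋ' H hH).2 t ht)⟩, fun c => ?_⟩
  obtain ⟨a', ha', H, hH, hc⟩ := hW' fun a w => c (a + w)
  refine ⟨a', ha', H, hH, fun a ha R hR K hK => ?_⟩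
  have hdisj : Disjoint K H := by
    refine disjoint_left.2 fun t htK htH => ?_
    rcases mem_insert.1 hK with rfl | hK
    · exact notMem_empty t htK
    · exact ((hN K hK t htK).trans_le
        ((le_max_right _ _).trans ((hℋ' H hH).2 t htH))).false
  have hw : a + R (∑ t ∈ K, x t) ∈ window := add_mem_add ha (mem_image₂_of_mem hR hK)
  convert congrFun (hc _ (mem_image₂_of_mem hR hK)) ⟨_, hw⟩ using 2
  simp only [Pi.sub_apply, Pi.add_apply, crossDiff_apply, sum_union hdisj]
  abel

lemma HasFocus.succ [Finite κ] {n j : ℕ} (h0 : ∀ R ∈ 𝓡, R 0 = 0)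
    (hrec : ∀ ℋ, IPRecurrent x (derived x 𝓡 g ℋ)) (h : HasFocus x 𝓡 κ n j) :
    HasFocus x 𝓡 κ n (j + 1) := by
  classical
  obtain ⟨W, ℋ, hℋ, hW⟩ := h
  obtain ⟨W', ℋ', hℋ', hW'⟩ := exists_shift (κ := κ) 𝓡 (hrec ℋ) W n
  refine ⟨(W' + W) ∪ (W' + W - ℋ'.image fun H => g (∑ t ∈ H, x t)),
    ℋ ∪ (insert ∅ ℋ ⊻ ℋ'), fun H hH => ?_, fun c => ?_⟩
  · rcases mem_union.1 hH with hH | hH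
    · exact hℋ H hH
    obtain ⟨K, hK, H', hH', rfl⟩ := mem_sups.1 hH
    refine ⟨(hℋ' H' hH').1.mono subset_union_right, fun t ht => ?_⟩
    rcases mem_union.1 ht with ht | ht
    · rcases mem_insert.1 hK with rfl | hK
      · exact absurd ht (notMem_empty t)
      · exact (hℋ K hK).2 t ht
    · exact (hℋ' H' hH').2 t ht
  · obtain ⟨a', ha', H, hH, hshift⟩ := hW' c
    obtain ⟨a, ha, C, hC, hcol⟩ := hW fun z => c (a' + z)
    by_cases hmem : c (a' + a) ∈ C
    · refine ⟨a' + a, mem_union_left _ (add_mem_add ha' ha), C, fun k hk => ?_, Or.inl hmem⟩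
      simpa only [add_assoc] using hC.mono subset_union_left k hk
    · refine ⟨a' + a - g (∑ t ∈ H, x t), mem_union_right _
        (sub_mem_sub (add_mem_add ha' ha) (mem_image_of_mem _ hH)), insert (c (a' + a)) C,
        (hC.insert_color h0 hH (hshift a ha)).mono subset_union_right, Or.inr ?_⟩
      rw [card_insert_of_notMem hmem]
      exact Nat.succ_le_succ (hcol.resolve_left hmem)

lemma IPRecurrent.of_derived (h0 : ∀ R ∈ 𝓡, R 0 = 0)
    (hrec : ∀ ℋ, IPRecurrent x (derived x 𝓡 g ℋ)) : IPRecurrent x 𝓡 := by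
  intro κ _ n
  have := Fintype.ofFinite κ
  have hfocus (j : ℕ) : HasFocus x 𝓡 κ n j :=
    Nat.rec (.zero x 𝓡 κ n) (fun _ => .succ h0 hrec) j
  obtain ⟨W, ℋ, hℋ, hW⟩ := hfocus (Fintype.card κ + 1)
  refine ⟨W, ℋ, hℋ, fun c => ?_⟩
  obtain ⟨a, ha, C, hC, hcol | hcard⟩ := hW c
  · exact ⟨a, ha, hC _ hcol⟩
  · exact absurd (hcard.trans (card_le_univ C)) (Nat.not_succ_le_self _)

/-- The bookkeeping of polynomial exhaustion: a pair `(e, g)` stands for the class of the maps of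
degree at most `e + 1` that differ from `g` by a map of degree at most `e`, and the classes of `M`
cover `𝓡`. -/
def Covers (M : Multiset (ℕ × (V → G))) (𝓡 : Finset (V → G)) : Prop :=
  (∀ q ∈ M, q.2 ∈ polyMap (q.1 + 1)) ∧ ∀ R ∈ 𝓡, ∃ q ∈ M, R - q.2 ∈ polyMap q.1

lemma Covers.exists_mem_polyMap {M : Multiset (ℕ × (V → G))} (h : Covers M 𝓡) {R : V → G}
    (hR : R ∈ 𝓡) : ∃ q ∈ M, R - q.2 ∈ polyMap q.1 ∧ R ∈ polyMap (q.1 + 1) := by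
  obtain ⟨q, hq, hRq⟩ := h.2 R hR
  refine ⟨q, hq, hRq, ?_⟩
  simpa using add_mem (polyMap_mono q.1.le_succ hRq) (h.1 q hq)

open Classical in
lemma Covers.exists_covers_derived {M : Multiset (ℕ × (V → G))} {e : ℕ}
    (h : Covers ((e, g) ::ₘ M) 𝓡) (hmin : ∀ q ∈ M, e ≤ q.1) (x : ℕ → V) (ℋ : Finset (Finset ℕ)) :
    ∃ L : Multiset (ℕ × (V → G)), (∀ q ∈ L, q.1 < e) ∧
      Covers (L + M.map fun q => (q.1, q.2 - g)) ((derived x 𝓡 g ℋ).erase 0) := by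
  have hg : g ∈ polyMap (e + 1) := h.1 (e, g) (Multiset.mem_cons_self _ _)
  let low := ((derived x 𝓡 g ℋ).erase 0).filter (· ∈ polyMap e)
  have he : ∀ R ∈ low, 0 < e := by
    intro R hR
    obtain ⟨hR0, hRe⟩ := mem_filter.1 hR
    refine Nat.pos_of_ne_zero fun he => ne_of_mem_erase hR0 ?_
    subst he
    exact hRe
  refine ⟨low.val.map fun R => (e - 1, R), fun q hq => ?_, fun q hq => ?_, fun R' hR' => ?_⟩
  · obtain ⟨R, hR, rfl⟩ := Multiset.mem_map.1 hq
    exact Nat.sub_one_lt_of_lt (he R hR)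
  · rcases Multiset.mem_add.1 hq with hq | hq <;> obtain ⟨r, hr, rfl⟩ := Multiset.mem_map.1 hq
    · simpa only [Nat.sub_add_cancel (he r hr)] using (mem_filter.1 hr).2
    · exact sub_mem (h.1 r (Multiset.mem_cons_of_mem hr))
        (polyMap_mono (Nat.succ_le_succ (hmin r hr)) hg)
  · obtain ⟨R, hR, K, -, rfl⟩ := mem_image₂.1 (mem_of_mem_erase hR')
    obtain ⟨q, hq, hRq, hRd⟩ := h.exists_mem_polyMap hR
    have hsum := add_mem (mem_polyMap_succ.1 hRd (∑ t ∈ K, x t)) hRq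
    rcases Multiset.mem_cons.1 hq with rfl | hq
    · refine ⟨_, Multiset.mem_add.2 (Or.inl (Multiset.mem_map_of_mem _
        (mem_filter.2 ⟨hR', ?_⟩))), by simp⟩
      simpa only [add_sub_assoc] using hsum
    · refine ⟨_, Multiset.mem_add.2 (Or.inr (Multiset.mem_map_of_mem _ hq)), ?_⟩
      simpa only [sub_sub_sub_cancel_right, add_sub_assoc] using hsum

lemma Covers.ipRecurrent (x : ℕ → V) {M : Multiset (ℕ × (V → G))} (h : Covers M 𝓡) :
    IPRecurrent x 𝓡 := by
  classical
  induction M using (InvImage.wf (Multiset.map Prod.fst)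
    (wellFounded_lt (α := ℕ)).cutExpand).induction generalizing 𝓡 with
  | _ M ih =>
  rcases eq_or_ne M 0 with rfl | hM
  · obtain rfl : 𝓡 = ∅ := eq_empty_of_forall_notMem fun R hR => by simpa using h.2 R hR
    exact .empty x
  obtain ⟨⟨e, g⟩, hq, hmin⟩ := Multiset.exists_min_image Prod.fst hM
  obtain ⟨M', rfl⟩ := Multiset.exists_cons_of_mem hq
  refine .of_derived (g := g) (fun R hR => ?_) fun ℋ => .of_erase_zero ?_
  · obtain ⟨q, -, -, hR⟩ := h.exists_mem_polyMap hR
    exact apply_zero_of_mem_polyMap hR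
  · obtain ⟨L, hL, hcov⟩ :=
      h.exists_covers_derived (fun q hq => hmin q (Multiset.mem_cons_of_mem hq)) x ℋ
    refine ih _ ⟨L.map Prod.fst, e, ?_, ?_⟩ hcov
    · simpa using hL
    · simp only [Multiset.map_add, Multiset.map_map, Function.comp_def, ← Multiset.singleton_add]
      abel

theorem ipRecurrent_of_polyMap (x : ℕ → V) (h : ∀ R ∈ 𝓡, ∃ d, R ∈ polyMap d) :
    IPRecurrent x 𝓡 := by
  choose! d hd using h
  refine Covers.ipRecurrent x (M := 𝓡.val.map fun R => (d R, R)) ⟨fun q hq => ?_, fun R hR => ?_⟩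
  · obtain ⟨R, hR, rfl⟩ := Multiset.mem_map.1 hq
    exact polyMap_mono (Nat.le_succ _) (hd R hR)
  · exact ⟨_, Multiset.mem_map_of_mem _ hR, by simp⟩

end IPRecurrent

lemma IsPolyZeroConst.exists_cast_mem_polyMap {P : ℕ → ℕ} (hP : IsPolyZeroConst P) {V : Type*}
    [AddZeroClass V] (φ : V →+ ℕ) : ∃ d, (fun v => (P (φ v) : ℤ)) ∈ polyMap d := by
  obtain ⟨Q, hQ0, hQ⟩ := hP
  refine ⟨(Q.map (Nat.castRingHom ℤ)).natDegree, ?_⟩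
  convert eval_sub_eval_zero_mem_polyMap ((Nat.castAddMonoidHom ℤ).comp φ)
    (P := Q.map (Nat.castRingHom ℤ)) le_rfl using 2 with v
  have hzero : (Q.map (Nat.castRingHom ℤ)).eval 0 = 0 := by
    rw [← Polynomial.coeff_zero_eq_eval_zero, Polynomial.coeff_map, hQ0, map_zero]
  simp [hzero, hQ]

theorem exists_polynomial_translates_same_color {κ : Type} [Finite κ] (c : ℕ → κ)
    {T : Finset (ℕ → ℕ)} (hT : ∀ P ∈ T, IsPolyZeroConst P) (F : Finset (ℕ → ℕ)) :
    ∃ (a : ℕ) (H : Finset ℕ), H.Nonempty ∧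
      ∀ P ∈ T, ∀ f ∈ F, c (a + P (∑ t ∈ H, f t)) = c a := by
  classical
  have hrec : IPRecurrent (fun t (f : ℕ → ℕ) => f t) <|
      Finset.image₂ (fun P f (v : (ℕ → ℕ) → ℕ) => (P (v f) : ℤ)) T F := by
    refine ipRecurrent_of_polyMap _ fun R hR => ?_
    obtain ⟨P, hP, f, -, rfl⟩ := Finset.mem_image₂.1 hR
    exact (hT P hP).exists_cast_mem_polyMap (Pi.evalAddMonoidHom (fun _ => ℕ) f)
  obtain ⟨W, ℋ, hℋ, hW⟩ := hrec κ 0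
  -- `W` is independent of the colouring, so it can be translated into `ℕ` beforehand.
  obtain ⟨M, hM⟩ : ∃ M : ℕ, ∀ a ∈ W, 0 ≤ a + M :=
    ⟨W.sup Int.natAbs, fun a ha => by have := Finset.le_sup (f := Int.natAbs) ha; omega⟩
  obtain ⟨a, ha, H, hH, hc⟩ := hW fun z => c (z + M).toNat
  refine ⟨(a + M).toNat, H, (hℋ H hH).1, fun P hP f hf => ?_⟩
  rw [← hc _ (Finset.mem_image₂_of_mem hP hf), Finset.sum_apply]
  congr 1
  have := hM a ha
  omega

/-! ### Members of minimal idempotent ultrafilters -/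

theorem exists_add_add_eq_of_minimal_idempotent {M : Type*} [AddSemigroup M] [TopologicalSpace M]
    [CompactSpace M] [T2Space M] (hcont : ∀ r : M, Continuous (· + r)) {p : M} (hp : p + p = p)
    (hmin : ∀ q, q + q = q → q + p = q → p + q = q → q = p) (q : M) : ∃ r, r + (q + p) = p := by
  obtain ⟨_, ⟨r, rfl⟩, he⟩ := exists_idempotent_in_compact_add_subsemigroup hcont
    (Set.range (· + (q + p))) ⟨_, Set.mem_range_self p⟩ (isCompact_range (hcont _)) (by
      rintro _ ⟨a, rfl⟩ _ ⟨b, rfl⟩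
      exact ⟨a + (q + p) + b, by simp only [add_assoc]⟩)
  set e := r + (q + p) with he_def
  have hep : e + p = e := by rw [he_def, add_assoc, add_assoc, hp]
  have hpe : p + e = p := by
    refine hmin _ ?_ (by rw [add_assoc, hep]) (by rw [← add_assoc, hp])
    rw [add_assoc, ← add_assoc e, hep, he]
  exact ⟨p + r, by rw [add_assoc, hpe]⟩

lemma exists_finset_cover_of_forall_ultrafilter {X ι : Type*} {B : ι → Set X}
    (hB : ∀ q : Ultrafilter X, ∃ i, B i ∈ q) : ∃ E : Finset ι, ∀ x, ∃ i ∈ E, x ∈ B i := by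
  obtain ⟨E, hE⟩ := isCompact_univ.elim_finite_subcover (fun i => {q : Ultrafilter X | B i ∈ q})
    (fun i => ultrafilter_isOpen_basic (B i)) fun q _ => Set.mem_iUnion.2 (hB q)
  refine ⟨E, fun x => ?_⟩
  simpa using hE (Set.mem_univ (pure x))

section Ultrafilter

attribute [local instance] Ultrafilter.addSemigroup

lemma uAdd_eq_add (p q : Ultrafilter ℕ) : uAdd p q = p + q :=
  Ultrafilter.coe_inj.1 (Filter.ext' fun _ => Iff.rfl)

lemma exists_finset_forall_eventually_add_add_mem {M : Type*} [AddSemigroup M] {p : Ultrafilter M}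
    (hp : ∀ q : Ultrafilter M, ∃ r, r + (q + p) = p) {A : Set M} (hA : A ∈ p) :
    ∃ E : Finset M, ∀ x, ∃ t ∈ E, ∀ᶠ y in p, t + (x + y) ∈ A := by
  refine exists_finset_cover_of_forall_ultrafilter (B := fun t => {x | ∀ᶠ y in p, t + (x + y) ∈ A})
    fun q => ?_
  obtain ⟨r, hr⟩ := hp q
  have hA' : ∀ᶠ z in (r + (q + p) : Ultrafilter M), z ∈ A := by rwa [hr]
  exact ((Ultrafilter.eventually_add r (q + p) (· ∈ A)).1 hA').exists

lemma IsMinimalIdempotent.exists_finset_forall_eventually {p : Ultrafilter ℕ}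
    (hp : IsMinimalIdempotent p) {A : Set ℕ} (hA : A ∈ p) :
    ∃ E : Finset ℕ, ∀ x, ∃ t ∈ E, ∀ᶠ y in p, t + (x + y) ∈ A := by
  obtain ⟨hidem, hmin⟩ := hp
  simp only [IdempotentUF, uAdd_eq_add] at hidem hmin
  exact exists_finset_forall_eventually_add_add_mem
    (exists_add_add_eq_of_minimal_idempotent Ultrafilter.continuous_add_left hidem hmin) hA

end Ultrafilter

/-- `A ⊆ ℕ` is a `J_p`-set: the analogue of `IsJSet` for polynomials vanishing at `0`, finitely many
at a time. -/
def IsPolyJSet (A : Set ℕ) : Prop :=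
  ∀ T F : Finset (ℕ → ℕ), (∀ P ∈ T, IsPolyZeroConst P) →
    ∃ (a : ℕ) (H : Finset ℕ), H.Nonempty ∧ ∀ P ∈ T, ∀ f ∈ F, a + P (∑ t ∈ H, f t) ∈ A

lemma IsPolyJSet.exists_forall_ge {A : Set ℕ} (hA : IsPolyJSet A) {T : Finset (ℕ → ℕ)}
    (hT : ∀ P ∈ T, IsPolyZeroConst P) (F : Finset (ℕ → ℕ)) (n : ℕ) :
    ∃ (a : ℕ) (H : Finset ℕ), H.Nonempty ∧ (∀ t ∈ H, n ≤ t) ∧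
      ∀ P ∈ T, ∀ f ∈ F, a + P (∑ t ∈ H, f t) ∈ A := by
  classical
  obtain ⟨a, H, hH, haH⟩ := hA T (F.image fun f t => f (t + n)) hT
  refine ⟨a, H.map (addRightEmbedding n), hH.map, fun t ht => ?_, fun P hP f hf => ?_⟩
  · obtain ⟨s, -, rfl⟩ := Finset.mem_map.1 ht
    exact Nat.le_add_left n s
  · simpa using haH P hP _ (Finset.mem_image_of_mem _ hf)

theorem IsMinimalIdempotent.isPolyJSet {p : Ultrafilter ℕ} (hp : IsMinimalIdempotent p)
    {A : Set ℕ} (hA : A ∈ p) : IsPolyJSet A := by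
  intro T F hT
  obtain ⟨E, hE⟩ := hp.exists_finset_forall_eventually hA
  choose τ hτE hτ using hE
  obtain ⟨a, H, hH, hc⟩ :=
    exists_polynomial_translates_same_color (fun x => (⟨τ x, hτE x⟩ : E)) hT F
  have hev : ∀ᶠ y in p, ∀ P ∈ T, ∀ f ∈ F, τ a + (a + P (∑ t ∈ H, f t) + y) ∈ A := by
    simp only [Filter.eventually_all_finset]
    intro P hP f hf
    have hcol : τ (a + P (∑ t ∈ H, f t)) = τ a := congrArg Subtype.val (hc P hP f hf)
    exact hcol ▸ hτ (a + P (∑ t ∈ H, f t))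
  obtain ⟨y, hy⟩ := hev.exists
  refine ⟨τ a + a + y, H, hH, fun P hP f hf => ?_⟩
  convert hy P hP f hf using 1
  ring

/-! ### Trees of lists along an idempotent ultrafilter -/

/-- A tree of lists (latest entry first) which contains the empty list and is closed, for `p`-most
`y`, under prepending `y` to a list and under adding `y` to the first entry of a list. -/
structure IsStarTree (p : Ultrafilter ℕ) (Q : List ℕ → Prop) : Prop where
  nil : Q []
  cons {L : List ℕ} : Q L → ∀ᶠ y in p, Q (y :: L)
  add_head {x : ℕ} {L : List ℕ} : Q (x :: L) → ∀ᶠ y in p, Q ((x + y) :: L)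

lemma exists_tree_of_mem_tensor {p : Ultrafilter ℕ} {m : ℕ} {A : Set (Fin m → ℕ)}
    (hA : A ∈ tensor m fun _ => p) :
    ∃ Q : List ℕ → Prop, Q [] ∧ (∀ L, Q L → ∀ᶠ y in p, Q (L ++ [y])) ∧
      ∀ v, Q (List.ofFn v) → v ∈ A := by
  induction m with
  | zero =>
    have helim : (fun i : Fin 0 => (i.elim0 : ℕ)) ∈ A := hA
    exact ⟨fun _ => True, trivial, by simp, fun v _ => Subsingleton.elim _ v ▸ helim⟩
  | succ m ih =>
    let slice (x : ℕ) : Set (Fin m → ℕ) := {v | (Fin.cons x v : Fin (m + 1) → ℕ) ∈ A}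
    choose! Q hQnil hQconcat hQmem using
      fun x (hx : slice x ∈ tensor m fun _ => p) => ih hx
    refine ⟨fun L => ∀ x L', L = x :: L' → slice x ∈ (tensor m fun _ => p) ∧ Q x L',
      by simp, fun L hL => ?_, fun v hv => ?_⟩
    · cases L with
      | nil =>
        have hlarge : ∀ᶠ x in p, slice x ∈ tensor m fun _ => p := hA
        filter_upwards [hlarge] with y hy
        rintro _ _ ⟨⟩
        exact ⟨hy, hQnil y hy⟩
      | cons x L =>
        obtain ⟨hx, hxL⟩ := hL x L rfl
        filter_upwards [hQconcat x hx L hxL] with y hy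
        rintro _ _ ⟨⟩
        exact ⟨hx, hy⟩
    · obtain ⟨hlarge, htail⟩ := hv _ _ (List.ofFn_succ)
      exact Fin.cons_self_tail v ▸ hQmem _ hlarge _ htail

lemma IdempotentUF.eventually_eventually_add {p : Ultrafilter ℕ} (hp : IdempotentUF p)
    {D : ℕ → Prop} (h : ∀ᶠ x in p, D x) : ∀ᶠ x in p, ∀ᶠ y in p, D (x + y) := by
  have hadd : ∀ᶠ x in uAdd p p, D x := by rwa [show uAdd p p = p from hp]
  exact hadd

/-- Membership in the star of a tree `Q`: the passage from `A` to `{x ∈ A | ∀ᶠ y in p, x + y ∈ A}`,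
applied to the first entry of each list. -/
def InStar (p : Ultrafilter ℕ) (Q : List ℕ → Prop) : List ℕ → Prop
  | [] => Q []
  | x :: L => Q (x :: L) ∧ ∀ᶠ y in p, Q ((x + y) :: L)

lemma InStar.base {p : Ultrafilter ℕ} {Q : List ℕ → Prop} {L : List ℕ} (h : InStar p Q L) :
    Q L := by
  cases L with
  | nil => exact h
  | cons x L => exact h.1

lemma IdempotentUF.isStarTree_inStar {p : Ultrafilter ℕ} (hp : IdempotentUF p) {Q : List ℕ → Prop}
    (hnil : Q []) (hcons : ∀ L, Q L → ∀ᶠ y in p, Q (y :: L)) : IsStarTree p (InStar p Q) where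
  nil := hnil
  cons {L} h := by
    have hL := hcons L h.base
    filter_upwards [hL, hp.eventually_eventually_add hL] with y hy hy' using ⟨hy, hy'⟩
  add_head {x L} h := by
    filter_upwards [h.2, hp.eventually_eventually_add h.2] with y hy hy'
    exact ⟨hy, by simpa only [add_assoc] using hy'⟩

theorem IdempotentUF.exists_isStarTree_of_mem_tensor {p : Ultrafilter ℕ} (hp : IdempotentUF p)
    {m : ℕ} {A : Set (Fin m → ℕ)} (hA : A ∈ tensor m fun _ => p) :
    ∃ Q, IsStarTree p Q ∧ ∀ v, Q (List.ofFn v).reverse → v ∈ A := by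
  obtain ⟨Q, hnil, hconcat, hmem⟩ := exists_tree_of_mem_tensor hA
  refine ⟨InStar p fun L => Q L.reverse, hp.isStarTree_inStar hnil fun L hL => ?_, fun v hv => ?_⟩
  · simpa only [List.reverse_cons] using hconcat L.reverse hL
  · exact hmem v (by simpa only [List.reverse_reverse] using hv.base)

/-! ### Blocks and their moves -/

lemma IsPolyZeroConst.exists_add {P : ℕ → ℕ} (hP : IsPolyZeroConst P) (x : ℕ) :
    ∃ D, IsPolyZeroConst D ∧ ∀ y, P (x + y) = P x + D y := by
  obtain ⟨Q, -, hQ⟩ := hP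
  let R := Q.comp (Polynomial.C x + Polynomial.X)
  refine ⟨fun y => (R.divX * Polynomial.X).eval y, ⟨_, by simp, fun _ => rfl⟩, fun y => ?_⟩
  have heval := congrArg (Polynomial.eval y) (Polynomial.divX_mul_X_add R)
  have hcoeff : R.coeff 0 = P x := by simp [R, Polynomial.coeff_zero_eq_eval_zero, hQ]
  have hR : R.eval y = P (x + y) := by simp [R, hQ]
  rw [Polynomial.eval_add, Polynomial.eval_C, hcoeff, hR] at heval
  rw [← heval, add_comm]

section Block

variable {T : Finset (ℕ → ℕ)}

/-- The data of one coordinate of the tuple in the theorem: the sum `a` of the `α (G i)`, the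
sum `x` of the `∑ t ∈ H (G i), f i t`, and the polynomial applied to `x`. -/
structure Block (T : Finset (ℕ → ℕ)) where
  a : ℕ
  x : ℕ
  P : T

/-- The coordinate described by a block. -/
def Block.value (b : Block T) : ℕ := b.a + (b.P : ℕ → ℕ) b.x

/-- The block obtained when a further index contributes `a` and `y` to the sums. -/
def Block.extend (a y : ℕ) (b : Block T) : Block T := ⟨b.a + a, b.x + y, b.P⟩

/-- The block whose sums range over the index set `β`. -/
def Block.over (α y : ℕ → ℕ) (β : Finset ℕ) (P : T) : Block T := ⟨∑ i ∈ β, α i, ∑ i ∈ β, y i, P⟩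

open Classical in
/-- The lists of blocks (latest first) which `s` can become at an index contributing `a` and `y`:
the index is skipped, joins the latest block, or starts a new one. -/
noncomputable def moves (a y : ℕ) (s : List (Block T)) : Finset (List (Block T)) :=
  insert s <| insert (s.modifyHead (Block.extend a y)) <|
    Finset.univ.image fun P : T => ⟨a, y, P⟩ :: s

lemma exists_map_value_modifyHead_extend (hT : ∀ P ∈ T, IsPolyZeroConst P) (s : List (Block T)) :
    ∃ D, IsPolyZeroConst D ∧ ∀ a y, (s.modifyHead (Block.extend a y)).map Block.value =
      (s.map Block.value).modifyHead (· + (a + D y)) := by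
  cases s with
  | nil => exact ⟨0, ⟨0, by simp, by simp⟩, fun _ _ => rfl⟩
  | cons b s =>
    obtain ⟨D, hD, hadd⟩ := (hT b.P b.P.2).exists_add b.x
    refine ⟨D, hD, fun a y => ?_⟩
    simp only [List.modifyHead_cons, List.map_cons, Block.value, Block.extend, hadd]
    congr 1
    ring

lemma IsStarTree.eventually_modifyHead {p : Ultrafilter ℕ} {Q : List ℕ → Prop}
    (hQ : IsStarTree p Q) {L : List ℕ} (hL : Q L) : ∀ᶠ z in p, Q (L.modifyHead (· + z)) := by
  cases L with
  | nil => exact .of_forall fun _ => hL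
  | cons x L => exact hQ.add_head hL

theorem IsStarTree.exists_forall_moves {p : Ultrafilter ℕ} (hJ : ∀ B ∈ p, IsPolyJSet B)
    {Q : List ℕ → Prop} (hQ : IsStarTree p Q) (hT : ∀ P ∈ T, IsPolyZeroConst P)
    {S : Finset (List (Block T))} (hS : ∀ s ∈ S, Q (s.map Block.value)) (F : Finset (ℕ → ℕ))
    (n : ℕ) :
    ∃ (a : ℕ) (H : Finset ℕ), H.Nonempty ∧ (∀ t ∈ H, n ≤ t) ∧
      ∀ f ∈ F, ∀ s ∈ S, ∀ s' ∈ moves a (∑ t ∈ H, f t) s, Q (s'.map Block.value) := by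
  classical
  have hlarge : ∀ᶠ z in p, ∀ s ∈ S, Q (z :: s.map Block.value) ∧
      Q ((s.map Block.value).modifyHead (· + z)) :=
    (Filter.eventually_all_finset S).2 fun s hs =>
      (hQ.cons (hS s hs)).and (hQ.eventually_modifyHead (hS s hs))
  choose D hD hvalue using exists_map_value_modifyHead_extend hT
  have hpoly : ∀ P ∈ T ∪ S.image D, IsPolyZeroConst P := by
    intro P hP
    rcases Finset.mem_union.1 hP with hP | hP
    · exact hT P hP
    · obtain ⟨s, -, rfl⟩ := Finset.mem_image.1 hP
      exact hD s
  obtain ⟨a, H, hH, hn, haH⟩ := (hJ _ hlarge).exists_forall_ge hpoly F n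
  refine ⟨a, H, hH, hn, fun f hf s hs s' hs' => ?_⟩
  simp only [moves, Finset.mem_insert, Finset.mem_image, Finset.mem_univ, true_and] at hs'
  obtain rfl | rfl | ⟨P, rfl⟩ := hs'
  · exact hS s' hs
  · rw [hvalue]
    exact (haH _ (Finset.mem_union_right _ (Finset.mem_image_of_mem D hs)) f hf s hs).2
  · exact (haH P (Finset.mem_union_left _ P.2) f hf s hs).1

/-- Closure along a chain: when the index `i` contributes `α i` and `y i`, every move takes the
lists of blocks in `S i`, built from indices below `i`, into `S (i + 1)`. -/
def MovesClosed (α y : ℕ → ℕ) (S : ℕ → Set (List (Block T))) : Prop :=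
  ∀ i, ∀ s ∈ S i, ∀ s' ∈ moves (α i) (y i) s, s' ∈ S (i + 1)

namespace MovesClosed

variable {S : ℕ → Set (List (Block T))} {α y : ℕ → ℕ}

lemma monotone (hS : MovesClosed α y S) : Monotone S :=
  monotone_nat_of_le_succ fun i s hs => hS i s hs s (by simp [moves])

lemma over_cons_mem (hS : MovesClosed α y S) {n N : ℕ} {s : List (Block T)} (hs : s ∈ S n)
    {β : Finset ℕ} (hβ : β.Nonempty) (hnN : ∀ i ∈ β, n ≤ i ∧ i < N) (P : T) :
    .over α y β P :: s ∈ S N := by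
  have hmono := hS.monotone
  induction β using Finset.induction_on_max generalizing N with
  | empty => exact absurd hβ Finset.not_nonempty_empty
  | insert k β hk ih =>
    have hk_notMem : k ∉ β := fun h => (hk k h).false
    obtain ⟨hnk, hkN⟩ := hnN k (Finset.mem_insert_self k β)
    refine hmono hkN ?_
    rcases β.eq_empty_or_nonempty with rfl | hβ'
    · exact hS k s (hmono hnk hs) _ (by simp [moves, Block.over])
    · have hβk := ih hβ' fun i hi => ⟨(hnN i (Finset.mem_insert_of_mem hi)).1, hk i hi⟩
      refine hS k _ hβk _ ?_
      simp [moves, Block.over, Block.extend, Finset.sum_insert hk_notMem, add_comm]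

lemma reverse_ofFn_over_mem (hS : MovesClosed α y S) (h0 : [] ∈ S 0) {m : ℕ}
    {β : Fin m → Finset ℕ} (hβ : ∀ l, (β l).Nonempty)
    (hlt : ∀ l l', l < l' → ∀ i ∈ β l, ∀ j ∈ β l', i < j)
    {N : ℕ} (hN : ∀ l, ∀ i ∈ β l, i < N) (P : Fin m → T) :
    (List.ofFn fun l => Block.over α y (β l) (P l)).reverse ∈ S N := by
  induction m generalizing N with
  | zero => exact hS.monotone N.zero_le h0
  | succ m ih =>
    rw [List.ofFn_succ', List.concat_eq_append, List.reverse_concat]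
    refine hS.over_cons_mem (n := (β (Fin.last m)).min' (hβ _)) (ih (fun l => hβ _)
      (fun l l' hl => hlt _ _ (Fin.castSucc_lt_castSucc_iff.2 hl)) (fun l i hi => ?_) _) (hβ _)
      (fun i hi => ⟨Finset.min'_le _ i hi, hN _ i hi⟩) _
    exact hlt _ _ (Fin.castSucc_lt_last l) i hi _ (Finset.min'_mem _ _)

end MovesClosed

end Block

/-! ### Recursion over finite sets of functions -/

lemma exists_forall_image_ssubsets {X D : Type*} [DecidableEq X] [DecidableEq D]
    {r : Finset X → Finset D → D → Prop} (h : ∀ F 𝒟, ∃ d, r F 𝒟 d) :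
    ∃ Φ : Finset X → D, ∀ F, r F (F.ssubsets.image Φ) (Φ F) := by
  choose next hnext using h
  let Φ : Finset X → D := (wellFounded_lt (α := Finset X)).fix fun F Φ =>
    next F (F.ssubsets.attach.image fun G => Φ G.1 (Finset.mem_ssubsets.1 G.2))
  have hΦ (F : Finset X) : Φ F = next F (F.ssubsets.image Φ) := by
    conv_rhs => rw [← Finset.attach_image_val (s := F.ssubsets), Finset.image_image]
    exact WellFounded.fix_eq _ _ F
  exact ⟨Φ, fun F => by rw [hΦ F]; exact hnext F _⟩

/-- What the recursion assigns to a finite set `F`: the values `a = α F` and `H = H F`, and the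
lists of blocks, with values in the tree `Q`, that can be present once `F` has occurred in a
chain. -/
structure Stage (T : Finset (ℕ → ℕ)) (Q : List ℕ → Prop) where
  a : ℕ
  H : Finset ℕ
  states : Finset (List (Block T))
  good : ∀ s ∈ states, Q (s.map Block.value)

namespace Stage

variable {T : Finset (ℕ → ℕ)} {Q : List ℕ → Prop}

open Classical in
/-- The lists of blocks that can be present when a chain has passed only through sets whose stages
lie in `𝒟`. -/
noncomputable def available (𝒟 : Finset (Stage T Q)) : Finset (List (Block T)) :=
  insert [] (𝒟.biUnion states)

/-- The stage `d` may be assigned to `F` once the stages of `𝒟` have been assigned to the proper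
subsets of `F`. -/
structure Follows (F : Finset (ℕ → ℕ)) (𝒟 : Finset (Stage T Q)) (d : Stage T Q) : Prop where
  nonempty : d.H.Nonempty
  lt : ∀ e ∈ 𝒟, ∀ x ∈ e.H, ∀ y ∈ d.H, x < y
  moves_subset : ∀ f ∈ F, ∀ s ∈ available 𝒟, moves d.a (∑ t ∈ d.H, f t) s ⊆ d.states

lemma nil_mem_available (𝒟 : Finset (Stage T Q)) : [] ∈ available 𝒟 := by
  classical exact Finset.mem_insert_self _ _

lemma states_subset_available {𝒟 : Finset (Stage T Q)} {d : Stage T Q} (hd : d ∈ 𝒟) :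
    d.states ⊆ available 𝒟 := by
  classical exact (Finset.subset_biUnion_of_mem states hd).trans (Finset.subset_insert _ _)

lemma good_of_mem_available (hQ : Q []) {𝒟 : Finset (Stage T Q)} {s : List (Block T)}
    (hs : s ∈ available 𝒟) : Q (s.map Block.value) := by
  classical
  rcases Finset.mem_insert.1 hs with rfl | hs
  · exact hQ
  · obtain ⟨d, -, hd⟩ := Finset.mem_biUnion.1 hs
    exact d.good s hd

lemma exists_follows {p : Ultrafilter ℕ} (hJ : ∀ B ∈ p, IsPolyJSet B) (hQ : IsStarTree p Q)
    (hT : ∀ P ∈ T, IsPolyZeroConst P) (F : Finset (ℕ → ℕ)) (𝒟 : Finset (Stage T Q)) :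
    ∃ d, Follows F 𝒟 d := by
  classical
  obtain ⟨N, hN⟩ := exists_forall_mem_lt (𝒟.image H)
  obtain ⟨a, H, hH, hNH, hmoves⟩ := hQ.exists_forall_moves hJ hT
    (S := available 𝒟) (fun s hs => good_of_mem_available hQ.nil hs) F N
  refine ⟨⟨a, H, F.biUnion fun f => (available 𝒟).biUnion fun s => moves a (∑ t ∈ H, f t) s,
    fun s' hs' => ?_⟩, hH, fun e he x hx y hy => ?_, fun f hf s hs s' hs' => ?_⟩
  · simp only [Finset.mem_biUnion] at hs'
    obtain ⟨f, hf, s, hs, hs'⟩ := hs'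
    exact hmoves f hf s hs s' hs'
  · exact (hN e.H (Finset.mem_image_of_mem _ he) x hx).trans_le (hNH y hy)
  · exact Finset.mem_biUnion.2 ⟨f, hf, Finset.mem_biUnion.2 ⟨s, hs, hs'⟩⟩

end Stage

theorem multidimensional_stronger_polynomial_CST_I_infinitary_general {m : ℕ} {p : Ultrafilter ℕ}
    (hp : IdempotentUF p) (hJ : ∀ B ∈ p, IsPolyJSet B) {A : Set (Fin m → ℕ)}
    (hA : A ∈ tensor m fun _ => p) {T : Finset (ℕ → ℕ)} (hT : ∀ P ∈ T, IsPolyZeroConst P) :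
    ∃ (α : Finset (ℕ → ℕ) → ℕ) (H : Finset (ℕ → ℕ) → Finset ℕ),
      (∀ F, (H F).Nonempty) ∧ (∀ F G, F ⊂ G → ∀ x ∈ H F, ∀ y ∈ H G, x < y) ∧
      ∀ G : ℕ → Finset (ℕ → ℕ), StrictMono G → ∀ f : ℕ → ℕ → ℕ, (∀ i, f i ∈ G i) →
        ∀ β : Fin m → Finset ℕ, (∀ l, (β l).Nonempty) →
          (∀ l l', l < l' → ∀ x ∈ β l, ∀ y ∈ β l', x < y) →
          ∀ P : Fin m → ℕ → ℕ, (∀ l, P l ∈ T) →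
          (fun l => (∑ i ∈ β l, α (G i)) +
              P l (∑ i ∈ β l, ∑ t ∈ H (G i), f i t)) ∈ A := by
  classical
  obtain ⟨Q, hQ, hQA⟩ := hp.exists_isStarTree_of_mem_tensor hA
  obtain ⟨Φ, hΦ⟩ := exists_forall_image_ssubsets (Stage.exists_follows hJ hQ hT)
  have hΦ_mem {F G : Finset (ℕ → ℕ)} (hFG : F ⊂ G) : Φ F ∈ G.ssubsets.image Φ :=
    Finset.mem_image_of_mem Φ (Finset.mem_ssubsets.2 hFG)
  refine ⟨fun F => (Φ F).a, fun F => (Φ F).H, fun F => (hΦ F).nonempty,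
    fun F G hFG => (hΦ G).lt _ (hΦ_mem hFG), fun G hG f hf β hβ hlt P hP => hQA _ ?_⟩
  let S (i : ℕ) : Set (List (Block T)) := Stage.available ((G i).ssubsets.image Φ)
  have hS : MovesClosed (fun i => (Φ (G i)).a) (fun i => ∑ t ∈ (Φ (G i)).H, f i t) S :=
    fun i s hs s' hs' =>
      Stage.states_subset_available (hΦ_mem (hG i.lt_succ_self))
        ((hΦ (G i)).moves_subset (f i) (hf i) s hs hs')
  obtain ⟨N, hN⟩ := exists_forall_mem_lt (Finset.univ.image β)
  have hmem := hS.reverse_ofFn_over_mem (Stage.nil_mem_available _) hβ hlt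
    (fun l => hN _ (Finset.mem_image_of_mem β (Finset.mem_univ l))) fun l => ⟨P l, hP l⟩
  have hgood := Stage.good_of_mem_available hQ.nil hmem
  rwa [List.map_reverse, List.map_ofFn] at hgood

/-- Multidimensional Stronger Polynomial Central Sets Theorem I (infinitary form). -/
theorem multidimensional_stronger_polynomial_CST_I_infinitary (m : ℕ) (hm : 1 ≤ m)
    (p : Ultrafilter ℕ) (hp : IsMinimalIdempotent p)
    (A : Set (Fin m → ℕ)) (hA : A ∈ tensor m fun _ => p)
    (T : Finset (ℕ → ℕ)) (hT : T.Nonempty) (hTP : ∀ P ∈ T, IsPolyZeroConst P) :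
    ∃ (α : Finset (ℕ → ℕ) → ℕ) (H : Finset (ℕ → ℕ) → Finset ℕ),
      (∀ F : Finset (ℕ → ℕ), F.Nonempty → (H F).Nonempty) ∧
      (∀ F G : Finset (ℕ → ℕ), F.Nonempty → F ⊂ G →
        ∀ x ∈ H F, ∀ y ∈ H G, x < y) ∧
      (∀ G : ℕ → Finset (ℕ → ℕ),
        (∀ i, (G i).Nonempty) → (∀ i j, i < j → G i ⊂ G j) →
        ∀ f : ℕ → ℕ → ℕ, (∀ i, f i ∈ G i) →
        ∀ β : Fin m → Finset ℕ,
          (∀ l, (β l).Nonempty) →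
          (∀ l l' : Fin m, l < l' → ∀ x ∈ β l, ∀ y ∈ β l', x < y) →
          ∀ P : Fin m → ℕ → ℕ, (∀ l, P l ∈ T) →
          (fun l => (∑ i ∈ β l, α (G i)) +
              P l (∑ i ∈ β l, ∑ t ∈ H (G i), f i t)) ∈ A) := by
  obtain ⟨α, H, hH, hlt, hmem⟩ := multidimensional_stronger_polynomial_CST_I_infinitary_general
    hp.1 (fun _ hB => hp.isPolyJSet hB) hA hTP
  exact ⟨α, H, fun F _ => hH F, fun F G _ => hlt F G, fun G _ hG => hmem G fun i j => hG i j⟩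

end MultiCST
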